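/- The dimension of the degree-k homogeneous layer of the free Lie algebra on d generators is (1/k) · Σ_{n | k} μ(n) d^{k/n}, where μ is the Möbius function (Witt's formula). -/

import Mathlib

/-- The span of the generators: the first homogeneous layer of the free Lie algebra
on `d` generators. -/
noncomputable def freeLieGen (d : ℕ) : Submodule ℝ (FreeLieAlgebra ℝ (Fin d)) :=
  Submodule.span ℝ (Set.range (FreeLieAlgebra.of ℝ))

/-- The degree-`k` homogeneous layer of the free Lie algebra on `d` generators:
`L₁` is the span of the generators and `L_{k+1} = [L₁, L_k]`. -/
noncomputable def freeLieLayer (d : ℕ) : ℕ → Submodule ℝ (FreeLieAlgebra ℝ (Fin d))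
  | 0 => ⊥
  | 1 => freeLieGen d
  | (k + 2) => Submodule.span ℝ
      {z | ∃ x ∈ freeLieGen d, ∃ y ∈ freeLieLayer d (k + 1), z = ⁅x, y⁆}

section Words
variable {α : Type} [LinearOrder α]

theorem WF.app_lt_app {x y : List α} (p q : List α) (h : x < y) (hl : y.length ≤ x.length) :
    x ++ p < y ++ q := by
  induction x generalizing y with
  | nil =>
    cases y with
    | nil => simp at h
    | cons b y => simp at hl
  | cons a x ih =>
    cases y with
    | nil => simp at h
    | cons b y =>
      rw [List.cons_append, List.cons_append, List.cons_lt_cons_iff]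
      rw [List.cons_lt_cons_iff] at h
      rcases h with h | ⟨h1, h2⟩
      · exact Or.inl h
      · exact Or.inr ⟨h1, ih h2 (by simpa using hl)⟩

theorem WF.app_left_lt_iff (p : List α) {x y : List α} : p ++ x < p ++ y ↔ x < y := by
  induction p with
  | nil => simp
  | cons a p ih => simpa using ih

theorem WF.app_left_le (p : List α) {x y : List α} (h : x ≤ y) : p ++ x ≤ p ++ y := by
  rcases h.lt_or_eq with h | h
  · exact ((WF.app_left_lt_iff p).2 h).le
  · rw [h]

theorem WF.le_app (p q : List α) : p ≤ p ++ q := by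
  have : p ++ [] ≤ p ++ q := by
    apply WF.app_left_le
    cases q with
    | nil => exact le_rfl
    | cons a q => exact le_of_lt (List.nil_lt_cons a q)
  simpa using this

/-- if x < y then either x is a proper prefix, or strict difference -/
theorem WF.lt_cases {x y : List α} (h : x < y) :
    (∃ t, t ≠ [] ∧ y = x ++ t) ∨ (∀ p q, x ++ p < y ++ q) := by
  induction x generalizing y with
  | nil =>
    cases y with
    | nil => simp at h
    | cons b y => left; exact ⟨b :: y, by simp, by simp⟩
  | cons a x ih =>
    cases y with
    | nil => simp at h
    | cons b y =>
      rw [List.cons_lt_cons_iff] at h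
      rcases h with h | ⟨h1, h2⟩
      · right
        intro p q
        rw [List.cons_append, List.cons_append, List.cons_lt_cons_iff]
        exact Or.inl h
      · subst h1
        rcases ih h2 with ⟨t, ht, rfl⟩ | h3
        · left; exact ⟨t, ht, by simp⟩
        · right
          intro p q
          simpa using h3 p q

/-- Lyndon words -/
def WF.Lyn (w : List α) : Prop :=
  w ≠ [] ∧ ∀ u v, u ≠ [] → v ≠ [] → w = u ++ v → w < v

theorem WF.Lyn.single (a : α) : WF.Lyn [a] := by
  refine ⟨by simp, ?_⟩
  intro u v hu hv h
  have := congrArg List.length h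
  have h1 := List.length_pos_of_ne_nil hu
  have h2 := List.length_pos_of_ne_nil hv
  simp at this
  omega

theorem WF.Lyn.rot {u v : List α} (h : WF.Lyn (u ++ v)) (hu : u ≠ []) (hv : v ≠ []) :
    u ++ v < v ++ u := by
  have := h.2 u v hu hv rfl
  have := WF.app_lt_app [] u this (by simp)
  simpa using this

theorem WF.lyn_of_rot {w : List α} (hw : w ≠ [])
    (h : ∀ u v, u ≠ [] → v ≠ [] → w = u ++ v → w < v ++ u) : WF.Lyn w := by
  refine ⟨hw, ?_⟩
  intro u v hu hv e
  by_contra hc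
  have hne : v ≠ w := by
    intro h'
    have h1 := List.length_pos_of_ne_nil hu
    have := congrArg List.length e
    rw [h'] at this
    simp at this
    exact hu this
  have hlt : v < w := lt_of_le_of_ne (not_lt.1 hc) hne
  rcases WF.lt_cases hlt with ⟨t, ht, e2⟩ | h2
  · have h1 := h u v hu hv e
    have h3 := h v t hv ht e2
    rw [e2] at h1
    rw [WF.app_left_lt_iff] at h1
    have hl : t.length = u.length := by
      have := congrArg List.length (e.symm.trans e2)
      simp at this; omega
    rw [e] at h3
    have := WF.app_lt_app v v h1 (by omega)
    exact lt_asymm this h3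
  · have h1 := h u v hu hv e
    have := h2 u []
    rw [List.append_nil] at this
    exact lt_asymm this h1

theorem WF.Lyn.mul {l m : List α} (hl : WF.Lyn l) (hm : WF.Lyn m) (h : l < m) :
    WF.Lyn (l ++ m) := by
  have key : l ++ m < m := by
    rcases WF.lt_cases h with ⟨t, ht, e⟩ | h2
    · have := hm.2 l t hl.1 ht e
      conv_rhs => rw [e]
      rwa [WF.app_left_lt_iff]
    · simpa using h2 m []
  refine ⟨by simp [hl.1], ?_⟩
  intro u v hu hv e
  rcases List.append_eq_append_iff.1 e with ⟨a, h1, h2⟩ | ⟨a, h1, h2⟩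
  · -- u = l ++ a, m = a ++ v
    by_cases ha : a = []
    · subst ha
      simp at h2; subst h2; exact key
    · exact key.trans (hm.2 a v ha hv h2)
  · -- l = u ++ a, v = a ++ m
    by_cases ha : a = []
    · subst ha
      simp at h2; subst h2; exact key
    · have := hl.2 u a hu ha h1
      rw [h2]
      exact WF.app_lt_app m m this (by rw [h1]; simp)

theorem WF.Lyn.mul_comm_lt {l m : List α} (hl : WF.Lyn l) (hm : WF.Lyn m) (h : l < m) :
    l ++ m < m ++ l := (hl.mul hm h).rot hl.1 hm.1

/-- nonincreasing list of Lyndon words -/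
def WF.Fac (U : List (List α)) : Prop := U.Pairwise (· ≥ ·) ∧ ∀ l ∈ U, WF.Lyn l

theorem WF.exists_ins (l : List α) (hl : WF.Lyn l) (F : List (List α)) (hF : WF.Fac F) :
    ∃ G, WF.Fac G ∧ G.flatten = l ++ F.flatten := by
  induction F generalizing l with
  | nil => exact ⟨[l], ⟨by simp, by simpa using hl⟩, by simp⟩
  | cons c F ih =>
    have hF' : WF.Fac F := ⟨(List.pairwise_cons.1 hF.1).2, fun m hm => hF.2 m (by simp [hm])⟩
    by_cases h : l < c
    · obtain ⟨G, hG, e⟩ := ih (l ++ c) (hl.mul (hF.2 c (by simp)) h) hF'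
      exact ⟨G, hG, by simp [e]⟩
    · refine ⟨l :: c :: F, ⟨?_, ?_⟩, by simp⟩
      · rw [List.pairwise_cons]
        refine ⟨?_, hF.1⟩
        intro x hx
        rcases List.mem_cons.1 hx with rfl | hx
        · exact not_lt.1 h
        · exact ((List.pairwise_cons.1 hF.1).1 x hx).trans (not_lt.1 h)
      · intro x hx
        rcases List.mem_cons.1 hx with rfl | hx
        · exact hl
        · exact hF.2 x hx

theorem WF.exists_fac (w : List α) : ∃ F, WF.Fac F ∧ F.flatten = w := by
  induction w with
  | nil => exact ⟨[], ⟨by simp, by simp⟩, by simp⟩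
  | cons a w ih =>
    obtain ⟨F, hF, e⟩ := ih
    obtain ⟨G, hG, e'⟩ := WF.exists_ins [a] (WF.Lyn.single a) F hF
    exact ⟨G, hG, by simp [e', e]⟩

theorem WF.fac_gt {a : α} {l' : List α} (hl : WF.Lyn (a :: l')) {C : List (List α)}
    (hC : WF.Fac C) (e : C.flatten = l') : ∀ c ∈ C, [a] ++ C.flatten < c := by
  intro c hc
  obtain ⟨C', x, rfl⟩ : ∃ C' x, C = C' ++ [x] := by
    refine ⟨C.dropLast, C.getLast (List.ne_nil_of_mem hc), ?_⟩
    exact (List.dropLast_append_getLast _).symm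
  have hx : [a] ++ (C' ++ [x]).flatten < x := by
    have := hl.2 (a :: C'.flatten) x (by simp) (hC.2 x (by simp)).1 (by simp [← e])
    simpa [← e] using this
  rcases List.mem_append.1 hc with h | h
  · exact hx.trans_le ((List.pairwise_append.1 hC.1).2.2 c h x (by simp))
  · simp at h; subst h; exact hx

/-- merge -/
def WF.mg (U V : List (List α)) : List (List α) := U.merge V (fun a b => decide (b ≤ a))

theorem WF.mg_pos {a b : List α} {U V} (h : b ≤ a) : WF.mg (a :: U) (b :: V) = a :: WF.mg U (b :: V) := by
  simp [WF.mg, h]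

theorem WF.mg_neg {a b : List α} {U V} (h : a < b) : WF.mg (a :: U) (b :: V) = b :: WF.mg (a :: U) V := by
  simp [WF.mg, h]

theorem WF.mg_nil {U : List (List α)} : WF.mg U [] = U := by simp [WF.mg]
theorem WF.nil_mg {U : List (List α)} : WF.mg [] U = U := by simp [WF.mg]

theorem WF.mg_lt {b : List α} {U V} (h : ∀ a ∈ U, a < b) : WF.mg U (b :: V) = b :: WF.mg U V := by
  cases U with
  | nil => simp [WF.nil_mg]
  | cons a U => exact WF.mg_neg (h a (by simp))

theorem WF.mg_sorted {U V : List (List α)} (hU : U.Pairwise (· ≥ ·)) (hV : V.Pairwise (· ≥ ·)) :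
    (WF.mg U V).Pairwise (· ≥ ·) := by
  have := List.pairwise_merge (le := fun a b : List α => decide (b ≤ a)) (by
    intro a b c h1 h2
    simp only [decide_eq_true_eq] at *
    exact h2.trans h1) (by
    intro a b
    have := le_total a b
    simp only [Bool.or_eq_true, decide_eq_true_eq]
    exact this.symm) U V (by simpa using hU) (by simpa using hV)
  simpa [WF.mg] using this

theorem WF.mg_comm {U V : List (List α)} (hU : U.Pairwise (· ≥ ·)) (hV : V.Pairwise (· ≥ ·)) :
    WF.mg U V = WF.mg V U := by
  apply List.Perm.eq_of_pairwise (le := (· ≥ ·)) _ (WF.mg_sorted hU hV) (WF.mg_sorted hV hU)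
  · exact (List.merge_perm_append _).trans ((List.perm_append_comm).trans (List.merge_perm_append _).symm)
  · intro a b _ _ h1 h2
    exact le_antisymm h2 h1

theorem WF.mg_step0 (l : List α) (hl : WF.Lyn l) (U V : List (List α)) (hU : ∀ x ∈ U, x ≤ l)
    (hV : ∀ x ∈ V, WF.Lyn x) :
    l ++ (WF.mg U V).flatten ≤ (WF.mg (l :: U) V).flatten := by
  induction V with
  | nil => simp [WF.mg_nil]
  | cons g V ih =>
    by_cases h : g ≤ l
    · rw [WF.mg_pos h]; simp
    · rw [not_le] at h
      rw [WF.mg_neg h, WF.mg_lt (fun a ha => (hU a ha).trans_lt h)]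
      simp only [List.flatten_cons]
      have h1 := WF.app_lt_app (WF.mg U V).flatten (WF.mg U V).flatten
        (hl.mul_comm_lt (hV g (by simp)) h) (by simp [add_comm])
      rw [List.append_assoc, List.append_assoc] at h1
      exact h1.le.trans (WF.app_left_le g (ih (fun x hx => hV x (by simp [hx]))))

theorem WF.mg_step (C : List (List α)) (r : List α) (hr : WF.Lyn r) (U V : List (List α))
    (hC : ∀ c ∈ C, WF.Lyn c) (hC2 : ∀ c ∈ C, r ++ C.flatten < c)
    (hU : ∀ x ∈ U, x ≤ r ++ C.flatten) (hV : ∀ x ∈ V, WF.Lyn x) :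
    r ++ (WF.mg (C ++ U) V).flatten ≤ (WF.mg ((r ++ C.flatten) :: U) V).flatten := by
  induction C generalizing r V with
  | nil => simpa using WF.mg_step0 r hr U V (by simpa using hU) hV
  | cons c C ihC =>
    have hrc : r < c := (WF.le_app r _).trans_lt (hC2 c (by simp))
    have e : r ++ (c :: C).flatten = (r ++ c) ++ C.flatten := by simp
    have step : ∀ V : List (List α), (∀ x ∈ V, WF.Lyn x) → (r ++ c) ++ (WF.mg (C ++ U) V).flatten ≤
        (WF.mg ((r ++ (c :: C).flatten) :: U) V).flatten := by
      intro V hV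
      rw [e]
      apply ihC
      · exact hr.mul (hC c (by simp)) hrc
      · intro x hx; exact hC x (by simp [hx])
      · intro x hx; rw [← e]; exact hC2 x (by simp [hx])
      · intro x hx; rw [← e]; exact hU x hx
      · exact hV
    induction V with
    | nil => simp [WF.mg_nil]
    | cons g V ih =>
      by_cases h : g ≤ c
      · rw [List.cons_append, WF.mg_pos h]
        simpa using step (g :: V) hV
      · rw [not_le] at h
        have h' : r ++ (c :: C).flatten < g := (hC2 c (by simp)).trans h
        rw [List.cons_append, WF.mg_neg h, WF.mg_neg h']
        have h1 := WF.app_lt_app (WF.mg (c :: C ++ U) V).flatten (WF.mg (c :: C ++ U) V).flatten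
          (hr.mul_comm_lt (hV g (by simp)) (hrc.trans h)) (by simp [add_comm])
        rw [List.append_assoc, List.append_assoc] at h1
        exact h1.le.trans (WF.app_left_le g (ih (fun x hx => hV x (by simp [hx]))))

/-- multiplicity of `z` in the shuffle of `u` and `v` -/
def WF.sh : List α → List α → List α → ℝ
  | u, v, [] => if u = [] ∧ v = [] then 1 else 0
  | u, v, a :: z => (if u.head? = some a then WF.sh u.tail v z else 0)
      + (if v.head? = some a then WF.sh u v.tail z else 0)

theorem WF.sh_nonneg (u v z : List α) : 0 ≤ WF.sh u v z := by
  induction z generalizing u v with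
  | nil => rw [WF.sh]; split_ifs <;> simp
  | cons a z ih =>
    rw [WF.sh]
    have := ih u.tail v
    have := ih u v.tail
    split_ifs <;> positivity

theorem WF.sh_self (u v : List α) : 0 < WF.sh u v (u ++ v) := by
  induction u with
  | nil =>
    induction v with
    | nil => simp [WF.sh]
    | cons a v ih => simpa [WF.sh] using ih
  | cons a u ih =>
    rw [List.cons_append, WF.sh]
    have := WF.sh_nonneg (a :: u) v.tail (u ++ v)
    simp only [List.head?_cons, if_true, List.tail_cons]
    split_ifs
    · linarith
    · linarith

theorem WF.fac_step (a : α) (u : List α) (U : List (List α)) (hU : WF.Fac U)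
    (e : U.flatten = a :: u) : ∃ U', WF.Fac U' ∧ U'.flatten = u ∧
      ∀ V, WF.Fac V → a :: (WF.mg U' V).flatten ≤ (WF.mg U V).flatten := by
  cases U with
  | nil => simp at e
  | cons l U =>
    have hl := hU.2 l (by simp)
    cases l with
    | nil => exact absurd rfl hl.1
    | cons b l =>
      simp at e
      obtain ⟨rfl, e⟩ := e
      obtain ⟨C, hC, eC⟩ := WF.exists_fac l
      have hgt := WF.fac_gt hl hC eC
      have hUl := (List.pairwise_cons.1 hU.1)
      have e1 : [b] ++ C.flatten = b :: l := by simp [eC]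
      refine ⟨C ++ U, ⟨?_, ?_⟩, by simp [eC, e], ?_⟩
      · rw [List.pairwise_append]
        refine ⟨hC.1, hUl.2, ?_⟩
        intro c hc x hx
        exact (hUl.1 x hx).trans (by rw [← e1]; exact (hgt c hc).le)
      · intro x hx
        rcases List.mem_append.1 hx with h | h
        · exact hC.2 x h
        · exact hU.2 x (by simp [h])
      · intro V hV
        have := WF.mg_step C [b] (WF.Lyn.single b) U V hC.2 hgt
          (by rw [e1]; exact hUl.1) hV.2
        rw [e1] at this
        exact this

theorem WF.sh_le (z u v : List α) (U V : List (List α)) (hU : WF.Fac U) (hV : WF.Fac V)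
    (eU : U.flatten = u) (eV : V.flatten = v) (h : WF.sh u v z ≠ 0) :
    z ≤ (WF.mg U V).flatten := by
  induction z generalizing u v U V with
  | nil => exact WF.le_app [] _
  | cons a z ih =>
    rw [WF.sh] at h
    by_cases h1 : (if u.head? = some a then WF.sh u.tail v z else 0) ≠ 0
    · split_ifs at h1 with h2
      · cases u with
        | nil => simp at h2
        | cons b u =>
          simp at h2; subst h2
          obtain ⟨U', hU', e', H⟩ := WF.fac_step b u U hU eU
          exact (List.cons_le_cons b (ih u v U' V hU' hV e' eV h1)).trans (H V hV)
      · simp at h1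
    · replace h1 : (if v.head? = some a then WF.sh u v.tail z else 0) ≠ 0 := by
        intro h3
        rw [not_not] at h1
        rw [h1, h3] at h
        simp at h
      split_ifs at h1 with h2
      · cases v with
        | nil => simp at h2
        | cons b v =>
          simp at h2; subst h2
          obtain ⟨V', hV', e', H⟩ := WF.fac_step b v V hV eV
          have := (List.cons_le_cons b (ih u v U V' hU hV' eU e' h1))
          rw [WF.mg_comm hU.1 hV'.1] at this
          rw [WF.mg_comm hU.1 hV.1]
          exact this.trans (H U hU)
      · simp at h1

theorem WF.exists_shuffle (w : List α) (hw : w ≠ []) (hn : ¬ WF.Lyn w) :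
    ∃ u v, u ≠ [] ∧ v ≠ [] ∧ w = u ++ v ∧ ∀ z, WF.sh u v z ≠ 0 → z ≤ w := by
  obtain ⟨F, hF, e⟩ := WF.exists_fac w
  match F, hF, e with
  | [], _, e => exact absurd (by simpa using e.symm) hw
  | [l], hF, e => simp at e; subst e; exact absurd (hF.2 l (by simp)) hn
  | l :: m :: F, hF, e =>
    have hp := List.pairwise_cons.1 hF.1
    refine ⟨l, (m :: F).flatten, (hF.2 l (by simp)).1, ?_, by simp [← e], ?_⟩
    · have := (hF.2 m (by simp)).1
      simp [this]
    · intro z hz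
      have := WF.sh_le z l _ [l] (m :: F) ⟨by simp, by simpa using hF.2 l (by simp)⟩
        ⟨hp.2, fun x hx => hF.2 x (List.mem_cons_of_mem _ hx)⟩ (by simp) rfl hz
      rw [WF.mg_pos (hp.1 m (by simp)), WF.nil_mg] at this
      rw [← e]; exact this

/-- induction for Lyndon words -/
theorem WF.Lyn.induct {motive : List α → Prop} (h1 : ∀ a, motive [a])
    (h2 : ∀ l m, WF.Lyn l → WF.Lyn m → l < m → motive l → motive m → motive (l ++ m))
    (w : List α) (hw : WF.Lyn w) : motive w := by
  induction hn : w.length using Nat.strong_induction_on generalizing w with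
  | _ n ih =>
    subst hn
    cases w with
    | nil => exact absurd rfl hw.1
    | cons a w =>
      obtain ⟨C, hC, eC⟩ := WF.exists_fac w
      have hgt := WF.fac_gt hw hC eC
      have key : ∀ (D : List (List α)) (r : List α), WF.Lyn r → motive r →
          (∀ c ∈ D, WF.Lyn c) → (∀ c ∈ D, motive c) → (∀ c ∈ D, r ++ D.flatten < c) →
          motive (r ++ D.flatten) := by
        intro D
        induction D with
        | nil => intro r _ h _ _ _; simpa using h
        | cons c D ihD =>
          intro r hr mr hL hM hG
          have hrc : r < c := (WF.le_app r _).trans_lt (hG c (by simp))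
          have e : r ++ (c :: D).flatten = (r ++ c) ++ D.flatten := by simp
          rw [e]
          apply ihD
          · exact hr.mul (hL c (by simp)) hrc
          · exact h2 r c hr (hL c (by simp)) hrc mr (hM c (by simp))
          · exact fun x hx => hL x (by simp [hx])
          · exact fun x hx => hM x (by simp [hx])
          · intro x hx; rw [← e]; exact hG x (by simp [hx])
      have := key C [a] (WF.Lyn.single a) (h1 a) hC.2 ?_ hgt
      · simpa [eC] using this
      · intro c hc
        refine ih c.length ?_ c (hC.2 c hc) rfl
        have : c.length ≤ C.flatten.length := (List.sublist_flatten_of_mem hc).length_le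
        rw [eC] at this
        simp; omega
end Words

section Layers
variable {d : ℕ}

theorem WF.layer_succ {k : ℕ} (hk : 1 ≤ k) {x y : FreeLieAlgebra ℝ (Fin d)}
    (hx : x ∈ freeLieGen d) (hy : y ∈ freeLieLayer d k) : ⁅x, y⁆ ∈ freeLieLayer d (k + 1) := by
  obtain ⟨k, rfl⟩ : ∃ j, k = j + 1 := ⟨k - 1, by omega⟩
  rw [freeLieLayer]
  exact Submodule.subset_span ⟨x, hx, y, hy, rfl⟩

theorem WF.layer_induct (p : ℕ → FreeLieAlgebra ℝ (Fin d) → Prop)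
    (h0 : ∀ k, p k 0) (hadd : ∀ k x y, p k x → p k y → p k (x + y))
    (hsmul : ∀ k (c : ℝ) x, p k x → p k (c • x))
    (hgen : ∀ i, p 1 (FreeLieAlgebra.of ℝ i))
    (hstep : ∀ k, 1 ≤ k → ∀ i y, y ∈ freeLieLayer d k → p k y →
      p (k + 1) ⁅(FreeLieAlgebra.of ℝ i : FreeLieAlgebra ℝ (Fin d)), y⁆)
    (k : ℕ) (hk : 1 ≤ k) (x : FreeLieAlgebra ℝ (Fin d)) (hx : x ∈ freeLieLayer d k) : p k x := by
  induction k, hk using Nat.le_induction generalizing x with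
  | base =>
    rw [freeLieLayer, freeLieGen] at hx
    induction hx using Submodule.span_induction with
    | mem x h => obtain ⟨i, rfl⟩ := h; exact hgen i
    | zero => exact h0 _
    | add x y _ _ h1 h2 => exact hadd _ _ _ h1 h2
    | smul c x _ h => exact hsmul _ _ _ h
  | succ k hk ih =>
    obtain ⟨j, rfl⟩ : ∃ j, k = j + 1 := ⟨k - 1, by omega⟩
    rw [freeLieLayer] at hx
    induction hx using Submodule.span_induction with
    | mem z h =>
      obtain ⟨x, hx, y, hy, rfl⟩ := h
      rw [freeLieGen] at hx
      induction hx using Submodule.span_induction with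
      | mem x h => obtain ⟨i, rfl⟩ := h; exact hstep _ hk i y hy (ih y hy)
      | zero => rw [zero_lie]; exact h0 _
      | add x y _ _ h1 h2 => rw [add_lie]; exact hadd _ _ _ h1 h2
      | smul c x _ h => rw [smul_lie]; exact hsmul _ _ _ h
    | zero => exact h0 _
    | add x y _ _ h1 h2 => exact hadd _ _ _ h1 h2
    | smul c x _ h => exact hsmul _ _ _ h

theorem WF.of_mem_gen (i : Fin d) : FreeLieAlgebra.of ℝ i ∈ freeLieGen d :=
  Submodule.subset_span ⟨i, rfl⟩

theorem WF.layer_lie {i : ℕ} (hi : 1 ≤ i) {x : FreeLieAlgebra ℝ (Fin d)}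
    (hx : x ∈ freeLieLayer d i) :
    ∀ j, 1 ≤ j → ∀ y ∈ freeLieLayer d j, ⁅x, y⁆ ∈ freeLieLayer d (i + j) := by
  refine WF.layer_induct (fun i x => ∀ j, 1 ≤ j → ∀ y ∈ freeLieLayer d j,
    ⁅x, y⁆ ∈ freeLieLayer d (i + j)) ?_ ?_ ?_ ?_ ?_ i hi x hx
  · intro k j _ y _; rw [zero_lie]; exact zero_mem _
  · intro k x y h1 h2 j hj z hz; rw [add_lie]; exact add_mem (h1 j hj z hz) (h2 j hj z hz)
  · intro k c x h j hj z hz; rw [smul_lie]; exact Submodule.smul_mem _ _ (h j hj z hz)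
  · intro i j hj y hy
    rw [add_comm]; exact WF.layer_succ hj (WF.of_mem_gen i) hy
  · intro k hk i p _ ih j hj q hq
    rw [lie_lie]
    apply sub_mem
    · have := WF.layer_succ (by omega) (WF.of_mem_gen i) (ih j hj q hq)
      rwa [show k + 1 + j = k + j + 1 by omega]
    · have := ih (j + 1) (by omega) _ (WF.layer_succ hj (WF.of_mem_gen i) hq)
      rwa [show k + 1 + j = k + (j + 1) by omega]

abbrev WF.T (d : ℕ) := MonoidAlgebra ℝ (FreeMonoid (Fin d))

/-- a word as an element of the tensor algebra -/
noncomputable def WF.wd (w : List (Fin d)) : WF.T d := MonoidAlgebra.single (FreeMonoid.ofList w) 1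

theorem WF.wd_mul (u v : List (Fin d)) : WF.wd u * WF.wd v = WF.wd (u ++ v) := by
  simp [WF.wd, MonoidAlgebra.single_mul_single]

attribute [local instance 100] LieRing.ofAssociativeRing

/-- the embedding -/
noncomputable def WF.iota (d : ℕ) : FreeLieAlgebra ℝ (Fin d) →ₗ⁅ℝ⁆ WF.T d :=
  FreeLieAlgebra.lift ℝ (fun i => WF.wd [i])

theorem WF.iota_of (i : Fin d) : WF.iota d (FreeLieAlgebra.of ℝ i) = WF.wd [i] := by
  simp [WF.iota]

theorem WF.iota_lie (x y : FreeLieAlgebra ℝ (Fin d)) :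
    WF.iota d ⁅x, y⁆ = WF.iota d x * WF.iota d y - WF.iota d y * WF.iota d x := by
  rw [LieHom.map_lie, LieRing.of_associative_ring_bracket]

/-- auxiliary operator -/
noncomputable def WF.E (i : Fin d) : Module.End ℝ (FreeLieAlgebra ℝ (Fin d) × ℝ) :=
  (LinearMap.inl ℝ (FreeLieAlgebra ℝ (Fin d)) ℝ) ∘ₗ
    (LinearMap.coprod (LieAlgebra.ad ℝ (FreeLieAlgebra ℝ (Fin d)) (FreeLieAlgebra.of ℝ i))
      (LinearMap.toSpanSingleton ℝ _ (FreeLieAlgebra.of ℝ i)))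

noncomputable def WF.R (d : ℕ) : WF.T d →ₐ[ℝ] Module.End ℝ (FreeLieAlgebra ℝ (Fin d) × ℝ) :=
  MonoidAlgebra.lift ℝ _ _ (FreeMonoid.lift WF.E)

theorem WF.R_wd (i : Fin d) : WF.R d (WF.wd [i]) = WF.E i := by
  rw [WF.R, WF.wd, MonoidAlgebra.lift_single, one_smul, FreeMonoid.ofList_singleton,
    FreeMonoid.lift_eval_of]

theorem WF.E_apply (i : Fin d) (y : FreeLieAlgebra ℝ (Fin d)) (t : ℝ) :
    WF.E i (y, t) = (⁅FreeLieAlgebra.of ℝ i, y⁆ + t • FreeLieAlgebra.of ℝ i, 0) := by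
  simp [WF.E]

theorem WF.dynkin (k : ℕ) (hk : 1 ≤ k) (x : FreeLieAlgebra ℝ (Fin d))
    (hx : x ∈ freeLieLayer d k) :
    (∀ y, WF.R d (WF.iota d x) (y, 0) = (⁅x, y⁆, 0)) ∧
      WF.R d (WF.iota d x) (0, 1) = ((k : ℝ) • x, 0) := by
  refine WF.layer_induct (fun k x => (∀ y, WF.R d (WF.iota d x) (y, 0) = (⁅x, y⁆, 0)) ∧
      WF.R d (WF.iota d x) (0, 1) = ((k : ℝ) • x, 0)) ?_ ?_ ?_ ?_ ?_ k hk x hx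
  · intro k; simp; rfl
  · intro k x y h1 h2
    simp [h1, h2, map_add]
  · intro k c x h
    simp [h, smul_comm c (k : ℝ)]
  · intro i
    simp [WF.iota_of, WF.R_wd, WF.E_apply]
  · intro k hk i q _ h
    rw [WF.iota_lie, WF.iota_of, map_sub, map_mul, map_mul, WF.R_wd]
    constructor
    · intro y
      simp [WF.E_apply, h]
    · have h2 := h.1 (FreeLieAlgebra.of ℝ i)
      simp only [Module.End.mul_apply, LinearMap.sub_apply, h.2, WF.E_apply]
      simp [h2, add_smul]
      rw [sub_eq_add_neg, lie_skew]

theorem WF.iota_inj (k : ℕ) (hk : 1 ≤ k) (x : FreeLieAlgebra ℝ (Fin d))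
    (hx : x ∈ freeLieLayer d k) (h : WF.iota d x = 0) : x = 0 := by
  have := (WF.dynkin k hk x hx).2
  rw [h, map_zero] at this
  have h2 := congrArg Prod.fst this
  have h3 : (k : ℝ) • x = 0 := h2.symm
  have h4 : (k : ℝ) ≠ 0 := by positivity
  exact (smul_eq_zero_iff_right h4).1 h3

/-- linear functional from a function on words -/
noncomputable def WF.fn (f : List (Fin d) → ℝ) : WF.T d →ₗ[ℝ] ℝ where
  toFun t := t.coeff.sum (fun z c => c * f z.toList)
  map_add' s t := by
    rw [MonoidAlgebra.coeff_add, Finsupp.sum_add_index'] <;> intros <;> ring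
  map_smul' c t := by
    rw [MonoidAlgebra.coeff_smul, Finsupp.sum_smul_index]
    · simp [Finsupp.mul_sum, mul_assoc]
    · simp

theorem WF.fn_apply (f : List (Fin d) → ℝ) (t : WF.T d) :
    WF.fn f t = t.coeff.sum (fun z c => c * f z.toList) := rfl

theorem WF.fn_wd (f : List (Fin d) → ℝ) (w : List (Fin d)) : WF.fn f (WF.wd w) = f w := by
  simp [WF.fn_apply, WF.wd]

theorem WF.T_ext {M : Type*} [AddCommMonoid M] [Module ℝ M] {f g : WF.T d →ₗ[ℝ] M}
    (h : ∀ w, f (WF.wd w) = g (WF.wd w)) (t : WF.T d) : f t = g t := by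
  induction t using MonoidAlgebra.induction_linear with
  | zero => simp
  | add x y hx hy => simp [hx, hy]
  | single m r =>
    have e : (MonoidAlgebra.single m r : WF.T d) = r • WF.wd m.toList := by
      simp [WF.wd]
    rw [e, map_smul, map_smul, h]

theorem WF.fn_left (f : List (Fin d) → ℝ) (a : Fin d) (t : WF.T d) :
    WF.fn f (WF.wd [a] * t) = WF.fn (fun z => f (a :: z)) t := by
  refine WF.T_ext (f := WF.fn f ∘ₗ LinearMap.mulLeft ℝ (WF.wd [a])) ?_ t
  intro w
  simp [WF.wd_mul, WF.fn_wd]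

theorem WF.fn_right (f : List (Fin d) → ℝ) (a : Fin d) (t : WF.T d) :
    WF.fn f (t * WF.wd [a]) = WF.fn (fun z => f (z ++ [a])) t := by
  refine WF.T_ext (f := WF.fn f ∘ₗ LinearMap.mulRight ℝ (WF.wd [a])) ?_ t
  intro w
  simp [WF.wd_mul, WF.fn_wd]

theorem WF.fn_add (f g : List (Fin d) → ℝ) (t : WF.T d) :
    WF.fn (fun z => f z + g z) t = WF.fn f t + WF.fn g t := by
  refine WF.T_ext (g := WF.fn f + WF.fn g) ?_ t
  intro w
  simp [WF.fn_wd]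

theorem WF.fn_ite (c : Prop) [Decidable c] (f : List (Fin d) → ℝ) (t : WF.T d) :
    WF.fn (fun z => if c then f z else 0) t = if c then WF.fn f t else 0 := by
  split_ifs
  · rfl
  · simp [WF.fn_apply]

theorem WF.sh_last (a : Fin d) (z u v : List (Fin d)) :
    WF.sh u v (z ++ [a]) = (if u.getLast? = some a then WF.sh u.dropLast v z else 0)
      + (if v.getLast? = some a then WF.sh u v.dropLast z else 0) := by
  induction z generalizing u v with
  | nil =>
    rcases u with _ | ⟨x, _ | ⟨y, u⟩⟩ <;> rcases v with _ | ⟨x', _ | ⟨y', v⟩⟩ <;> simp [WF.sh]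
  | cons b z ih =>
    rw [List.cons_append, WF.sh, ih, ih]
    rcases u with _ | ⟨x, _ | ⟨y, u⟩⟩ <;> rcases v with _ | ⟨x', _ | ⟨y', v⟩⟩ <;>
      simp [WF.sh] <;> split_ifs <;> simp_all <;> (try split_ifs) <;> (try simp_all) <;> (try ring)

theorem WF.sh_nil_comm (u z : List (Fin d)) : WF.sh u [] z = WF.sh [] u z := by
  induction z generalizing u with
  | nil => simp [WF.sh]
  | cons a z ih => simp [WF.sh, ih]

theorem WF.shuffle_zero (k : ℕ) (hk : 1 ≤ k) (x : FreeLieAlgebra ℝ (Fin d))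
    (hx : x ∈ freeLieLayer d k) (u v : List (Fin d)) (hu : u ≠ []) (hv : v ≠ []) :
    WF.fn (WF.sh u v) (WF.iota d x) = 0 := by
  revert u v
  refine WF.layer_induct (fun k x => ∀ u v : List (Fin d), u ≠ [] → v ≠ [] →
    WF.fn (WF.sh u v) (WF.iota d x) = 0) ?_ ?_ ?_ ?_ ?_ k hk x hx
  · intro k u v _ _; simp
  · intro k x y h1 h2 u v hu hv; simp [h1 u v hu hv, h2 u v hu hv]
  · intro k c x h u v hu hv; simp [h u v hu hv]
  · intro i u v hu hv
    rw [WF.iota_of, WF.fn_wd]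
    simp [WF.sh, hu, hv]
  · intro k hk i q _ h u v hu hv
    rw [WF.iota_lie, WF.iota_of, map_sub, WF.fn_left, WF.fn_right]
    simp only [WF.sh_last, WF.sh, WF.fn_add, WF.fn_ite]
    have hc : WF.fn (WF.sh ([] : List (Fin d)) v) = WF.fn (WF.sh v []) := by
      congr 1; ext z; exact (WF.sh_nil_comm v z).symm
    rcases u with _ | ⟨x, _ | ⟨y, u⟩⟩ <;> rcases v with _ | ⟨x', _ | ⟨y', v⟩⟩ <;>
      simp_all



/-- coefficient functional -/
noncomputable def WF.cf (w : List (Fin d)) : WF.T d →ₗ[ℝ] ℝ := WF.fn (fun z => if z = w then 1 else 0)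

theorem WF.cf_wd (w z : List (Fin d)) : WF.cf w (WF.wd z) = if z = w then 1 else 0 := WF.fn_wd _ _

theorem WF.cf_eq (w : List (Fin d)) (t : WF.T d) : WF.cf w t = t.coeff (FreeMonoid.ofList w) := by
  rw [WF.cf, WF.fn_apply, Finsupp.sum]
  rw [Finset.sum_eq_single (FreeMonoid.ofList w)]
  · simp
  · intro b _ hb
    have : b.toList ≠ w := fun h => hb (by rw [← h]; rfl)
    simp [this]
  · intro h
    simpa using h

/-- span of a set of words -/
noncomputable def WF.G (S : Set (List (Fin d))) : Submodule ℝ (WF.T d) := Submodule.span ℝ (WF.wd '' S)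

theorem WF.wd_mem {S : Set (List (Fin d))} {w} (h : w ∈ S) : WF.wd w ∈ WF.G S :=
  Submodule.subset_span ⟨w, h, rfl⟩

theorem WF.G_mono {S S' : Set (List (Fin d))} (h : S ⊆ S') : WF.G S ≤ WF.G S' :=
  Submodule.span_mono (Set.image_mono h)

theorem WF.G_mul {S S' S'' : Set (List (Fin d))} (h : ∀ u ∈ S, ∀ v ∈ S', u ++ v ∈ S'')
    {s t : WF.T d} (hs : s ∈ WF.G S) (ht : t ∈ WF.G S') : s * t ∈ WF.G S'' := by
  have h1 := Submodule.mul_mem_mul hs ht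
  rw [WF.G, WF.G, Submodule.span_mul_span] at h1
  refine Submodule.span_mono ?_ h1
  rintro _ ⟨_, ⟨u, hu, rfl⟩, _, ⟨v, hv, rfl⟩, rfl⟩
  exact ⟨u ++ v, h u hu v hv, (WF.wd_mul u v).symm⟩

theorem WF.cf_G {S : Set (List (Fin d))} {t : WF.T d} (ht : t ∈ WF.G S) {w} (hw : w ∉ S) :
    WF.cf w t = 0 := by
  rw [WF.G] at ht
  induction ht using Submodule.span_induction with
  | mem x h =>
    obtain ⟨z, hz, rfl⟩ := h
    rw [WF.cf_wd, if_neg]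
    rintro rfl; exact hw hz
  | zero => simp
  | add x y _ _ h1 h2 => simp [h1, h2]
  | smul c x _ h => simp [h]

theorem WF.homog (k : ℕ) (hk : 1 ≤ k) (x : FreeLieAlgebra ℝ (Fin d)) (hx : x ∈ freeLieLayer d k) :
    WF.iota d x ∈ WF.G {z | z.length = k} := by
  refine WF.layer_induct (fun k x => WF.iota d x ∈ WF.G {z | z.length = k}) ?_ ?_ ?_ ?_ ?_ k hk x hx
  · intro k; simp
  · intro k x y h1 h2; rw [map_add]; exact add_mem h1 h2
  · intro k c x h; rw [map_smul]; exact Submodule.smul_mem _ _ h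
  · intro i; rw [WF.iota_of]; exact WF.wd_mem (by simp)
  · intro k hk i q _ h
    have h1 : WF.wd [i] ∈ WF.G {z : List (Fin d) | z.length = 1} := WF.wd_mem (by simp)
    rw [WF.iota_lie, WF.iota_of]
    apply sub_mem
    · refine WF.G_mul ?_ h1 h
      intro u hu v hv
      simp only [Set.mem_ofPred_eq, List.length_append] at *; omega
    · refine WF.G_mul ?_ h h1
      intro u hu v hv
      simp only [Set.mem_ofPred_eq, List.length_append] at *; omega

/-- words strictly above -/
def WF.gt (w : List (Fin d)) : Set (List (Fin d)) := {z | z.length = w.length ∧ w < z}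
/-- words above -/
def WF.ge (w : List (Fin d)) : Set (List (Fin d)) := {z | z.length = w.length ∧ w ≤ z}

theorem WF.lead_ge {w : List (Fin d)} {t : WF.T d} (h : t - WF.wd w ∈ WF.G (WF.gt w)) :
    t ∈ WF.G (WF.ge w) := by
  have h1 : t = (t - WF.wd w) + WF.wd w := by abel
  rw [h1]
  refine add_mem (WF.G_mono ?_ h) (WF.wd_mem ⟨rfl, le_rfl⟩)
  exact fun z hz => ⟨hz.1, hz.2.le⟩

theorem WF.exists_lead (w : List (Fin d)) (hw : WF.Lyn w) :
    ∃ P ∈ freeLieLayer d w.length, WF.iota d P - WF.wd w ∈ WF.G (WF.gt w) := by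
  refine WF.Lyn.induct (motive := fun w => ∃ P ∈ freeLieLayer d w.length,
    WF.iota d P - WF.wd w ∈ WF.G (WF.gt w)) ?_ ?_ w hw
  · intro a
    refine ⟨FreeLieAlgebra.of ℝ a, ?_, ?_⟩
    · simp only [List.length_singleton]; rw [freeLieLayer]; exact WF.of_mem_gen a
    · rw [WF.iota_of, sub_self]; exact zero_mem _
  · rintro l m hl hm hlm ⟨P, hP, hP'⟩ ⟨Q, hQ, hQ'⟩
    have l1 : 1 ≤ l.length := List.length_pos_iff.2 hl.1
    have m1 : 1 ≤ m.length := List.length_pos_iff.2 hm.1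
    refine ⟨⁅P, Q⁆, ?_, ?_⟩
    · rw [List.length_append]; exact WF.layer_lie l1 hP _ m1 _ hQ
    · have e : WF.iota d ⁅P, Q⁆ - WF.wd (l ++ m) = (WF.iota d P - WF.wd l) * WF.iota d Q
        + WF.wd l * (WF.iota d Q - WF.wd m) - WF.iota d Q * WF.iota d P := by
        rw [WF.iota_lie, ← WF.wd_mul]; noncomm_ring
      rw [e]
      refine sub_mem (add_mem ?_ ?_) ?_
      · refine WF.G_mul ?_ hP' (WF.lead_ge hQ')
        rintro u ⟨hu, hu'⟩ v ⟨hv, hv'⟩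
        exact ⟨by simp [hu, hv], WF.app_lt_app _ _ hu' hu.le⟩
      · refine WF.G_mul (S := {l}) ?_ (WF.wd_mem rfl) hQ'
        rintro u rfl v ⟨hv, hv'⟩
        exact ⟨by simp [hv], (WF.app_left_lt_iff _).2 hv'⟩
      · refine WF.G_mul ?_ (WF.lead_ge hQ') (WF.lead_ge hP')
        rintro u ⟨hu, hu'⟩ v ⟨hv, hv'⟩
        refine ⟨by simp [hu, hv, add_comm], lt_of_lt_of_le (WF.Lyn.mul_comm_lt hl hm hlm) ?_⟩
        rcases hu'.eq_or_lt with rfl | hu'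
        · exact WF.app_left_le _ hv'
        · exact (WF.app_lt_app _ _ hu' hu.le).le

/-- Lyndon words of length `k` -/
def WF.Lam (d k : ℕ) := {w : List (Fin d) // w.length = k ∧ WF.Lyn w}

instance WF.Lam_finite (d k : ℕ) : Finite (WF.Lam d k) :=
  ((List.finite_length_eq (Fin d) k).subset (fun _ h => h.1)).to_subtype

noncomputable instance WF.Lam_fintype (d k : ℕ) : Fintype (WF.Lam d k) := Fintype.ofFinite _

noncomputable instance WF.Lam_order (d k : ℕ) : LinearOrder (WF.Lam d k) :=
  inferInstanceAs (LinearOrder {w : List (Fin d) // w.length = k ∧ WF.Lyn w})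

/-- coefficients at Lyndon words -/
noncomputable def WF.cmap (d k : ℕ) : freeLieLayer d k →ₗ[ℝ] (WF.Lam d k → ℝ) :=
  LinearMap.pi (fun w => WF.cf w.1 ∘ₗ (WF.iota d : FreeLieAlgebra ℝ (Fin d) →ₗ[ℝ] WF.T d) ∘ₗ
    (freeLieLayer d k).subtype)

theorem WF.cmap_apply (d k : ℕ) (x : freeLieLayer d k) (w : WF.Lam d k) :
    WF.cmap d k x w = WF.cf w.1 (WF.iota d x.1) := rfl

theorem WF.cmap_inj (d k : ℕ) (hk : 1 ≤ k) : Function.Injective (WF.cmap d k) := by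
  rw [injective_iff_map_eq_zero]
  rintro ⟨x, hx⟩ h
  have hc : ∀ w, w.length = k → WF.Lyn w → WF.cf w (WF.iota d x) = 0 := by
    intro w h1 h2
    exact congrFun h ⟨w, h1, h2⟩
  have h0 : WF.iota d x = 0 := by
    by_contra hne
    set t := WF.iota d x with ht
    have hs : (t.coeff.support.image FreeMonoid.toList).Nonempty := by
      rw [Finset.image_nonempty, Finsupp.support_nonempty_iff]
      intro h
      apply hne
      ext z
      rw [h]; rfl
    set w := (t.coeff.support.image FreeMonoid.toList).min' hs with hw
    have hmin : ∀ z, WF.cf z t ≠ 0 → w ≤ z := by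
      intro z hz
      apply Finset.min'_le
      rw [Finset.mem_image]
      refine ⟨FreeMonoid.ofList z, ?_, rfl⟩
      rw [Finsupp.mem_support_iff, ← WF.cf_eq]; exact hz
    have hwt : WF.cf w t ≠ 0 := by
      have := Finset.min'_mem _ hs
      rw [← hw, Finset.mem_image] at this
      obtain ⟨z, hz, hz'⟩ := this
      rw [WF.cf_eq, ← hz']
      exact Finsupp.mem_support_iff.1 hz
    have hwl : w.length = k := by
      by_contra hl
      exact hwt (WF.cf_G (WF.homog k hk x hx) hl)
    have hwn : w ≠ [] := by
      rintro h; rw [h] at hwl; simp at hwl; omega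
    have hL : ¬ WF.Lyn w := fun hL => hwt (hc w hwl hL)
    obtain ⟨u, v, hu, hv, huv, hz⟩ := WF.exists_shuffle w hwn hL
    have hsh := WF.shuffle_zero k hk x hx u v hu hv
    rw [← ht, WF.fn_apply, Finsupp.sum, Finset.sum_eq_single (FreeMonoid.ofList w)] at hsh
    · rw [← WF.cf_eq] at hsh
      rcases mul_eq_zero.1 hsh with h1 | h1
      · exact hwt h1
      · have := WF.sh_self u v
        rw [← huv] at this
        exact this.ne' h1
    · intro b hb hbw
      have h1 : WF.cf b.toList t ≠ 0 := by
        rw [WF.cf_eq]; exact Finsupp.mem_support_iff.1 hb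
      have h2 := hmin _ h1
      by_cases h3 : WF.sh u v b.toList = 0
      · rw [h3, mul_zero]
      · exact absurd (le_antisymm (hz _ h3) h2) (fun h => hbw (by rw [← h]; rfl))
    · intro h
      rw [Finsupp.notMem_support_iff] at h
      rw [h, zero_mul]
  exact Subtype.ext (WF.iota_inj k hk x hx h0)

theorem WF.finrank_layer (d k : ℕ) (hk : 1 ≤ k) :
    Module.finrank ℝ (freeLieLayer d k) = Nat.card (WF.Lam d k) := by
  have hinj := WF.cmap_inj d k hk
  have : Module.Finite ℝ (freeLieLayer d k) := Module.Finite.of_injective _ hinj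
  rw [Nat.card_eq_fintype_card]
  apply le_antisymm
  · have := LinearMap.finrank_le_finrank_of_injective hinj
    rwa [Module.finrank_fintype_fun_eq_card] at this
  · have hP : ∀ w : WF.Lam d k, ∃ P : freeLieLayer d k,
        WF.iota d P.1 - WF.wd w.1 ∈ WF.G (WF.gt w.1) := by
      rintro ⟨w, hw, hL⟩
      obtain ⟨P, h1, h2⟩ := WF.exists_lead w hL
      rw [hw] at h1
      exact ⟨⟨P, h1⟩, h2⟩
    choose P hP using hP
    have hli : LinearIndependent ℝ P := by
      apply LinearIndependent.of_comp (WF.cmap d k)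
      let A : Matrix (WF.Lam d k) (WF.Lam d k) ℝ := Matrix.of (fun i => WF.cmap d k (P i))
      have hA : ∀ i j : WF.Lam d k, j ≤ i → A i j = if i = j then 1 else 0 := by
        intro i j hij
        have h1 : WF.cf j.1 (WF.iota d (P i).1 - WF.wd i.1) = 0 :=
          WF.cf_G (hP i) (fun h => absurd h.2 (not_lt.2 hij))
        rw [map_sub, sub_eq_zero, WF.cf_wd] at h1
        change WF.cf j.1 (WF.iota d (P i).1) = _
        rw [h1]
        exact if_congr Subtype.ext_iff.symm rfl rfl
      have hdet : A.det = 1 := by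
        rw [Matrix.det_of_isUpperTriangular]
        · exact Finset.prod_eq_one (fun i _ => by rw [hA i i le_rfl, if_pos rfl])
        · intro i j hij
          have hij' : j < i := hij
          rw [hA i j hij'.le, if_neg hij'.ne']
      have := Matrix.linearIndependent_rows_of_isUnit ((Matrix.isUnit_iff_isUnit_det A).2 (by rw [hdet]; exact isUnit_one))
      exact this
    exact hli.fintype_card_le_finrank

end Layers

section Count
open Function
variable {d : ℕ}

/-- shift -/
def WF.sg (x : ℕ → Fin d) : ℕ → Fin d := fun n => x (n + 1)

theorem WF.sg_iter (x : ℕ → Fin d) (j : ℕ) : WF.sg^[j] x = fun n => x (n + j) := by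
  induction j generalizing x with
  | zero => rfl
  | succ j ih =>
    rw [iterate_succ_apply, ih]
    funext n
    simp only [WF.sg]
    congr 1

theorem WF.per_mod {x : ℕ → Fin d} {m : ℕ} (h : IsPeriodicPt WF.sg m x) (n : ℕ) :
    x (n % m) = x n := by
  have h1 : WF.sg^[m * (n / m)] x = x := (h.mul_const (n / m))
  rw [WF.sg_iter] at h1
  have h2 := congrFun h1 (n % m)
  simp only [Nat.mod_add_div] at h2
  exact h2.symm

/-- prefix -/
def WF.pre (m : ℕ) (x : ℕ → Fin d) : List (Fin d) := (List.range m).map x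

theorem WF.pre_length (m : ℕ) (x : ℕ → Fin d) : (WF.pre m x).length = m := by simp [WF.pre]

theorem WF.pre_add (a b : ℕ) (x : ℕ → Fin d) :
    WF.pre (a + b) x = WF.pre a x ++ WF.pre b (WF.sg^[a] x) := by
  rw [WF.sg_iter]
  simp [WF.pre, List.range_add, Function.comp_def, add_comm]

theorem WF.pre_inj {m : ℕ} (hm : 1 ≤ m) {x y : ℕ → Fin d} (hx : IsPeriodicPt WF.sg m x)
    (hy : IsPeriodicPt WF.sg m y) (h : WF.pre m x = WF.pre m y) : x = y := by
  funext n
  rw [← WF.per_mod hx, ← WF.per_mod hy]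
  rw [WF.pre, WF.pre, List.map_inj_left] at h
  exact h _ (List.mem_range.2 (Nat.mod_lt _ hm))

theorem WF.pre_shift {m p : ℕ} (hp : p ≤ m) {x : ℕ → Fin d} (hx : IsPeriodicPt WF.sg m x) :
    WF.pre m (WF.sg^[p] x) = WF.pre (m - p) (WF.sg^[p] x) ++ WF.pre p x := by
  have h := WF.pre_add (m - p) p (WF.sg^[p] x)
  rw [← iterate_add_apply, Nat.sub_add_cancel hp, show WF.sg^[m] x = x from hx] at h
  exact h

theorem WF.pre_split {m p : ℕ} (hp : p ≤ m) (x : ℕ → Fin d) :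
    WF.pre m x = WF.pre p x ++ WF.pre (m - p) (WF.sg^[p] x) := by
  have h := WF.pre_add p (m - p) x
  rwa [Nat.add_sub_cancel' hp] at h

theorem WF.pre_ne {m : ℕ} (hm : 1 ≤ m) (x : ℕ → Fin d) : WF.pre m x ≠ [] := by
  intro h
  have := WF.pre_length m x
  rw [h] at this
  simp at this; omega

theorem WF.lynA {m p : ℕ} (hp : 0 < p) (hpm : p < m) {x : ℕ → Fin d}
    (hx : IsPeriodicPt WF.sg m x) (hL : WF.Lyn (WF.pre m x)) :
    WF.pre m x < WF.pre m (WF.sg^[p] x) := by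
  rw [WF.pre_shift hpm.le hx]
  rw [WF.pre_split hpm.le x] at hL ⊢
  exact hL.rot (WF.pre_ne hp _) (WF.pre_ne (by omega) _)

theorem WF.lynB {m : ℕ} (hm : 1 ≤ m) {x : ℕ → Fin d} (hx : IsPeriodicPt WF.sg m x)
    (h : ∀ p, 0 < p → p < m → WF.pre m x < WF.pre m (WF.sg^[p] x)) : WF.Lyn (WF.pre m x) := by
  apply WF.lyn_of_rot (WF.pre_ne hm x)
  intro u v hu hv huv
  have hl := congrArg List.length huv
  rw [WF.pre_length, List.length_append] at hl
  have u1 := List.length_pos_iff.2 hu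
  have v1 := List.length_pos_iff.2 hv
  have hlt : u.length < m := by omega
  have h1 := h u.length u1 hlt
  have h2 := WF.pre_split hlt.le x
  rw [huv] at h2
  obtain ⟨e1, e2⟩ := List.append_inj h2 (WF.pre_length _ _).symm
  rw [WF.pre_shift hlt.le hx, ← e1, ← e2] at h1
  exact h1

/-- periodic Lyndon sequences -/
def WF.LX (d m : ℕ) := {x : ℕ → Fin d // IsPeriodicPt WF.sg m x ∧ WF.Lyn (WF.pre m x)}

/-- sequences of given minimal period -/
def WF.MP (d m : ℕ) := {x : ℕ → Fin d // minimalPeriod WF.sg x = m}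

/-- periodic extension -/
def WF.ext {m : ℕ} (hm : 1 ≤ m) (f : Fin m → Fin d) : ℕ → Fin d := fun n => f ⟨n % m, Nat.mod_lt _ hm⟩

theorem WF.ext_per {m : ℕ} (hm : 1 ≤ m) (f : Fin m → Fin d) : IsPeriodicPt WF.sg m (WF.ext hm f) := by
  change WF.sg^[m] _ = _
  rw [WF.sg_iter]
  funext n
  simp [WF.ext]

theorem WF.card_per (d m : ℕ) (hm : 1 ≤ m) :
    Nat.card {x : ℕ → Fin d // IsPeriodicPt WF.sg m x} = d ^ m := by
  have e : {x : ℕ → Fin d // IsPeriodicPt WF.sg m x} ≃ (Fin m → Fin d) :=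
    { toFun := fun x i => x.1 i
      invFun := fun f => ⟨WF.ext hm f, WF.ext_per hm f⟩
      left_inv := by
        rintro ⟨x, hx⟩
        apply Subtype.ext
        funext n
        exact WF.per_mod hx n
      right_inv := by
        intro f
        funext i
        simp [WF.ext, Nat.mod_eq_of_lt i.2] }
  rw [Nat.card_congr e]
  simp

theorem WF.card_LX (d m : ℕ) (hm : 1 ≤ m) : Nat.card (WF.LX d m) = Nat.card (WF.Lam d m) := by
  refine Nat.card_congr (Equiv.ofBijective
    (fun x => ⟨WF.pre m x.1, WF.pre_length _ _, x.2.2⟩) ⟨?_, ?_⟩)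
  · rintro ⟨x, hx, hx'⟩ ⟨y, hy, hy'⟩ h
    exact Subtype.ext (WF.pre_inj hm hx hy (congrArg Subtype.val h))
  · rintro ⟨w, rfl, hL⟩
    have e : WF.pre w.length (WF.ext hm (fun i => w[i])) = w := by
      apply List.ext_getElem
      · exact WF.pre_length _ _
      · intro n h1 h2
        simp [WF.pre, WF.ext, Nat.mod_eq_of_lt h2]
    exact ⟨⟨WF.ext hm (fun i => w[i]), WF.ext_per hm _, by rw [e]; exact hL⟩, Subtype.ext e⟩

theorem WF.iter_mod {x : ℕ → Fin d} {m : ℕ} (h : IsPeriodicPt WF.sg m x) (n : ℕ) :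
    WF.sg^[n % m] x = WF.sg^[n] x := h.iterate_mod_apply n

theorem WF.lyn_minper {m : ℕ} (hm : 1 ≤ m) {x : ℕ → Fin d} (hx : IsPeriodicPt WF.sg m x)
    (hL : WF.Lyn (WF.pre m x)) : minimalPeriod WF.sg x = m := by
  have h1 : minimalPeriod WF.sg x ≤ m := hx.minimalPeriod_le hm
  have h2 : 0 < minimalPeriod WF.sg x := hx.minimalPeriod_pos hm
  by_contra h3
  have := WF.lynA h2 (lt_of_le_of_ne h1 h3) hx hL
  rw [iterate_minimalPeriod] at this
  exact lt_irrefl _ this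

/-- rotation map -/
def WF.phi (d m : ℕ) (hm : 1 ≤ m) (q : WF.LX d m × Fin m) : WF.MP d m :=
  ⟨WF.sg^[q.2] q.1.1, by
    rw [minimalPeriod_apply_iterate (mk_mem_periodicPts hm q.1.2.1)]
    exact WF.lyn_minper hm q.1.2.1 q.1.2.2⟩

theorem WF.aux_lt {m : ℕ} (hm : 1 ≤ m) {x y : ℕ → Fin d} (hx : IsPeriodicPt WF.sg m x)
    (hy : IsPeriodicPt WF.sg m y) (hL : WF.Lyn (WF.pre m y)) {i j : ℕ} (hi : i < m) (hj : j < m)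
    (hij : i ≠ j) (h : WF.sg^[i] x = WF.sg^[j] y) : WF.pre m y < WF.pre m x := by
  have e : x = WF.sg^[(m - i + j) % m] y := by
    rw [WF.iter_mod hy, iterate_add_apply, ← h, ← iterate_add_apply, Nat.sub_add_cancel hi.le]
    exact hx.symm
  rw [e]
  refine WF.lynA ?_ (Nat.mod_lt _ hm) hy hL
  rcases lt_or_gt_of_ne hij with h1 | h1
  · rw [show m - i + j = (j - i) + m by omega, Nat.add_mod_right, Nat.mod_eq_of_lt (by omega)]
    omega
  · rw [Nat.mod_eq_of_lt (by omega)]; omega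

theorem WF.phi_bij (d m : ℕ) (hm : 1 ≤ m) : Bijective (WF.phi d m hm) := by
  constructor
  · rintro ⟨⟨x, hx, hx'⟩, i⟩ ⟨⟨y, hy, hy'⟩, j⟩ h
    have h1 : WF.sg^[i] x = WF.sg^[j] y := congrArg Subtype.val h
    by_cases hij : i = j
    · subst hij
      have : x = y := by
        have h2 := congrArg (WF.sg^[m - i]) h1
        rw [← iterate_add_apply, ← iterate_add_apply, Nat.sub_add_cancel i.2.le] at h2
        exact hx.symm.trans (h2.trans hy)
      subst this
      rfl
    · have hij' : (i : ℕ) ≠ j := fun h => hij (Fin.ext h)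
      have a1 := WF.aux_lt hm hx hy hy' i.2 j.2 hij' h1
      have a2 := WF.aux_lt hm hy hx hx' j.2 i.2 hij'.symm h1.symm
      exact absurd a1 (lt_asymm a2)
  · rintro ⟨y, hy⟩
    have hper : IsPeriodicPt WF.sg m y := by rw [← hy]; exact isPeriodicPt_minimalPeriod _ _
    obtain ⟨p, hp, hmin⟩ := Finset.exists_min_image (Finset.range m)
      (fun p => WF.pre m (WF.sg^[p] y)) ⟨0, Finset.mem_range.2 hm⟩
    rw [Finset.mem_range] at hp
    have hx : IsPeriodicPt WF.sg m (WF.sg^[p] y) := hper.apply_iterate p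
    have hL : WF.Lyn (WF.pre m (WF.sg^[p] y)) := by
      apply WF.lynB hm hx
      intro q hq hqm
      apply lt_of_le_of_ne
      · have := hmin ((q + p) % m) (Finset.mem_range.2 (Nat.mod_lt _ hm))
        rwa [WF.iter_mod hper, iterate_add_apply] at this
      · intro h
        have h2 := WF.pre_inj hm hx (hx.apply_iterate q) h
        have h3 : IsPeriodicPt WF.sg q (WF.sg^[p] y) := h2.symm
        have h4 := h3.minimalPeriod_le hq
        rw [minimalPeriod_apply_iterate (mk_mem_periodicPts hm hper), hy] at h4
        omega
    refine ⟨(⟨WF.sg^[p] y, hx, hL⟩, ⟨(m - p) % m, Nat.mod_lt _ hm⟩), ?_⟩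
    apply Subtype.ext
    change WF.sg^[(m - p) % m] (WF.sg^[p] y) = y
    rw [WF.iter_mod hx, ← iterate_add_apply, Nat.sub_add_cancel hp.le]
    exact hper

theorem WF.card_MP (d m : ℕ) (hm : 1 ≤ m) : Nat.card (WF.MP d m) = m * Nat.card (WF.Lam d m) := by
  rw [← Nat.card_congr (Equiv.ofBijective _ (WF.phi_bij d m hm)), Nat.card_prod, WF.card_LX d m hm,
    Nat.card_fin, mul_comm]

theorem WF.MP_finite (d m : ℕ) (hm : 1 ≤ m) : Finite (WF.MP d m) := by
  have e : Injective (fun x : WF.MP d m => (fun i : Fin m => x.1 i)) := by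
    rintro ⟨x, hx⟩ ⟨y, hy⟩ h
    have h1 : IsPeriodicPt WF.sg m x := by rw [← hx]; exact isPeriodicPt_minimalPeriod _ _
    have h2 : IsPeriodicPt WF.sg m y := by rw [← hy]; exact isPeriodicPt_minimalPeriod _ _
    apply Subtype.ext
    funext n
    change x n = y n
    rw [← WF.per_mod h1, ← WF.per_mod h2]
    exact congrFun h ⟨n % m, Nat.mod_lt _ hm⟩
  exact Finite.of_injective _ e

theorem WF.sum_lam (d k : ℕ) (hk : 1 ≤ k) :
    ∑ m ∈ k.divisors, m * Nat.card (WF.Lam d m) = d ^ k := by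
  let e : {x : ℕ → Fin d // IsPeriodicPt WF.sg k x} ≃ (Σ m : k.divisors, WF.MP d m) :=
    { toFun := fun x => ⟨⟨minimalPeriod WF.sg x.1,
        Nat.mem_divisors.2 ⟨x.2.minimalPeriod_dvd, by omega⟩⟩, ⟨x.1, rfl⟩⟩
      invFun := fun q => ⟨q.2.1, by
        rw [isPeriodicPt_iff_minimalPeriod_dvd, q.2.2]
        exact (Nat.mem_divisors.1 q.1.2).1⟩
      left_inv := fun x => rfl
      right_inv := by
        rintro ⟨⟨m, hm⟩, ⟨x, hx⟩⟩
        change minimalPeriod WF.sg x = m at hx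
        subst hx
        rfl }
  have hpos : ∀ m : k.divisors, 1 ≤ (m : ℕ) := fun m => Nat.pos_of_mem_divisors m.2
  have : ∀ m : k.divisors, Finite (WF.MP d m) := fun m => WF.MP_finite d m (hpos m)
  rw [← WF.card_per d k hk, Nat.card_congr e, Nat.card_sigma,
    ← Finset.sum_coe_sort k.divisors (fun m => m * Nat.card (WF.Lam d m))]
  exact Finset.sum_congr rfl (fun m _ => (WF.card_MP d m (hpos m)).symm)

end Count

/-- Witt's formula: the dimension of the degree-`k` homogeneous layer of the free
Lie algebra on `d` generators is `(1/k) Σ_{n ∣ k} μ(n) d^{k/n}`. -/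
theorem witt_formula (d k : ℕ) (hk : 1 ≤ k) :
    (Module.finrank ℝ (freeLieLayer d k) : ℤ) * (k : ℤ) =
      ∑ n ∈ k.divisors, ArithmeticFunction.moebius n * (d : ℤ) ^ (k / n) := by
  rw [WF.finrank_layer d k hk]
  have h := (ArithmeticFunction.sum_eq_iff_sum_mul_moebius_eq
    (f := fun m => ((m : ℤ) * (Nat.card (WF.Lam d m) : ℤ))) (g := fun m => (d : ℤ) ^ m)).1
    (fun n hn => by exact_mod_cast WF.sum_lam d n hn) k hk
  simp only [Int.cast_id] at h
  rw [Nat.sum_divisorsAntidiagonal (fun i j => ArithmeticFunction.moebius i * (d : ℤ) ^ j)] at h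
  rw [mul_comm]
  exact h.symm
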